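/- arXiv:1605.01511 — 4 statements merged into one kernel-verified Lean document; each statement's English description precedes it below -/
import Mathlib

section
/- Let G = (V, E) be a finite directed graph with |V| = n ≥ 1 vertices in which every vertex has outdegree at most m, and let v ∈ V be any vertex. Then the number of simple cycles of G that contain v (i.e., simple cycles (C, η) with v ∈ C) is at most m · (m+1)^(n−1). -/
/-- A simple cycle of the directed graph with vertex set `V` and edge relation `E`:
a non-empty set of vertices `C` together with a bijection `η : C → C` such that
`(v, η v)` is an edge for every `v ∈ C`, and for every `v ∈ C` and `n : ℕ`,
`η^[n] v = v` if and only if `n` is a multiple of `|C|`. -/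
structure SimpleCycle {V : Type} [Fintype V] (E : V → V → Prop) where
  C : Finset V
  nonempty : C.Nonempty
  η : {v // v ∈ C} → {v // v ∈ C}
  bij : Function.Bijective η
  edge : ∀ v : {v // v ∈ C}, E v.1 (η v).1
  period : ∀ (v : {v // v ∈ C}) (n : ℕ), η^[n] v = v ↔ C.card ∣ n

/-!
A simple cycle is determined by its partial successor map on the vertices. At `v` the successor is
an out-neighbour of `v`; at any other vertex `u` it is either an out-neighbour of `u` or undefined.
Counting such partial maps vertex by vertex gives the bound.
-/

namespace SimpleCycle

variable {V : Type} [Fintype V] {E : V → V → Prop}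

/-- The edge along which the cycle `c` leaves its vertex `u`, given by the endpoint of that edge. -/
def outEdge (c : SimpleCycle E) {u : V} (hu : u ∈ c.C) : {u' : V // E u u'} :=
  ⟨c.η ⟨u, hu⟩, c.edge ⟨u, hu⟩⟩

open Classical in
/-- The partial successor map of the cycle `c`, with value `none` off the cycle. Its values carry
the edge from `u`, so that at each vertex there are only outdegree plus one of them. -/
noncomputable def succ (c : SimpleCycle E) (u : V) : Option {u' : V // E u u'} :=
  if hu : u ∈ c.C then some (c.outEdge hu) else none

theorem succ_of_mem (c : SimpleCycle E) {u : V} (hu : u ∈ c.C) :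
    c.succ u = some (c.outEdge hu) :=
  dif_pos hu

theorem isSome_succ (c : SimpleCycle E) (u : V) : (c.succ u).isSome ↔ u ∈ c.C := by
  by_cases hu : u ∈ c.C <;> simp [succ, hu]

theorem succ_injective : Function.Injective (succ : SimpleCycle E → _) := by
  intro c d h
  have hC : c.C = d.C := by
    ext u
    rw [← isSome_succ, ← isSome_succ, h]
  have η_eq (u : V) (hc : u ∈ c.C) (hd : u ∈ d.C) : (c.η ⟨u, hc⟩ : V) = d.η ⟨u, hd⟩ := by
    have outEdge_eq : c.outEdge hc = d.outEdge hd :=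
      Option.some_injective _ <| by rw [← succ_of_mem, ← succ_of_mem, h]
    exact congrArg Subtype.val outEdge_eq
  obtain ⟨C, _, η, _, _, _⟩ := c
  obtain ⟨D, _, θ, _, _, _⟩ := d
  obtain rfl : C = D := hC
  obtain rfl : η = θ := funext fun ⟨u, hu⟩ =>
    Subtype.ext (η_eq u hu hu)
  rfl

theorem outEdge_succ_injective (v : V) :
    Function.Injective fun c : {c : SimpleCycle E // v ∈ c.C} =>
      (c.1.outEdge c.2, fun u : {u : V // u ≠ v} => c.1.succ u) := by
  rintro ⟨c, hc⟩ ⟨d, hd⟩ h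
  obtain ⟨h_out, h_succ⟩ := Prod.ext_iff.mp h
  refine Subtype.ext (succ_injective (funext fun u => ?_))
  obtain rfl | hu := eq_or_ne u v
  · rw [succ_of_mem c hc, succ_of_mem d hd]
    exact congrArg some h_out
  · exact congrFun h_succ ⟨u, hu⟩

end SimpleCycle

theorem card_simpleCycle_through_vertex_le_general
    {V : Type} [Fintype V] [DecidableEq V] (E : V → V → Prop) (v : V) :
    Nat.card {c : SimpleCycle E // v ∈ c.C} ≤
      {u : V | E v u}.ncard * ∏ u ∈ Finset.univ.erase v, ({u' : V | E u u'}.ncard + 1) :=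
  calc
    Nat.card {c : SimpleCycle E // v ∈ c.C}
      ≤ Nat.card ({u : V // E v u} × ∀ u : {u : V // u ≠ v}, Option {u' : V // E u u'}) :=
        Nat.card_le_card_of_injective _ (SimpleCycle.outEdge_succ_injective v)
    _ = {u : V | E v u}.ncard * ∏ u : {u : V // u ≠ v}, ({u' : V | E u u'}.ncard + 1) := by
        simp only [Nat.card_prod, Nat.card_pi, Finite.card_option, ← Nat.card_coe_set_eq,
          Set.coe_ofPred]
    _ = {u : V | E v u}.ncard * ∏ u ∈ Finset.univ.erase v, ({u' : V | E u u'}.ncard + 1) := by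
        rw [← Finset.prod_subtype (Finset.univ.erase v) (by simp)
          fun u => {u' : V | E u u'}.ncard + 1]

/-- In a finite directed graph with `n ≥ 1` vertices, each of outdegree at most `m`,
the number of simple cycles containing a fixed vertex `v` is at most `m * (m + 1) ^ (n - 1)`. -/
theorem card_simpleCycle_through_vertex_le
    {V : Type} [Fintype V] (E : V → V → Prop) (n m : ℕ)
    (hn : Fintype.card V = n) (hn1 : 1 ≤ n) (v : V)
    (hout : ∀ u : V, {u' : V | E u u'}.ncard ≤ m) :
    Nat.card {c : SimpleCycle E // v ∈ c.C} ≤ m * (m + 1) ^ (n - 1) := by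
  classical
  rw [← hn, ← Finset.card_univ, ← Finset.card_erase_of_mem (Finset.mem_univ v)]
  exact (card_simpleCycle_through_vertex_le_general E v).trans <| Nat.mul_le_mul (hout v) <|
    Finset.prod_le_pow_card _ _ _ fun u _ => Nat.succ_le_succ (hout u)
end

section
/- Let G = (V, E) be a finite directed graph containing a simple cycle of length n. Define the directed graph G' = (V × {0,1}, E') where ((v, b), (v', b')) ∈ E' if and only if (v, v') ∈ E (for all b, b' ∈ {0,1}). Then G' has at least 2^n simple cycles. Concretely, if (C, η) is a simple cycle of G of length n, then for every function f : C → {0,1} the pair ({(v, f(v)) : v ∈ C}, (v, f(v)) ↦ (η(v), f(η(v)))) is a simple cycle of G', and distinct functions f yield distinct simple cycles. -/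
/-!
Lifting a cycle `(C, η)` along a labelling `f` conjugates `η` by the bijection `v ↦ (v, f v)` from
`C` onto the graph of `f`, so all orbit lengths are preserved. The vertex set of the lift is the
graph of `f`, which determines `f`.
-/

attribute [ext] SimpleCycle

namespace SimpleCycle

variable {V W α : Type} [Fintype V] [Fintype W] [Fintype α]
  {E : V → V → Prop} {E' : W → W → Prop}

instance : Finite (SimpleCycle E) :=
  Finite.of_injective
    (fun c : SimpleCycle E => (⟨c.C, c.η⟩ : (C : Finset V) × ({v // v ∈ C} → {v // v ∈ C})))
    fun _ _ h => SimpleCycle.ext (Sigma.ext_iff.1 h).1 (Sigma.ext_iff.1 h).2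

/-- The simple cycle on `D` obtained by conjugating the successor map of `c` by an edge-compatible
bijection `e` from the vertices of `c` onto `D`. Only the edges `v → c.η v` have to be respected,
so `e` need not come from a homomorphism of graphs. -/
def transport (c : SimpleCycle E) {D : Finset W} (e : {v // v ∈ c.C} ≃ {w // w ∈ D})
    (he : ∀ v, E' (e v) (e (c.η v))) : SimpleCycle E' where
  C := D
  nonempty := Finset.nonempty_coe_sort.1 (e.nonempty_congr.1 c.nonempty.coe_sort)
  η := e.conj c.η
  bij := e.bijective.comp (c.bij.comp e.symm.bijective)
  edge := e.forall_congr_right.1 fun v => by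
    rw [← (e.semiconj_conj c.η).eq]
    exact he v
  period := e.forall_congr_right.1 fun v n => by
    rw [← ((e.semiconj_conj c.η).iterate_right n).eq, e.apply_eq_iff_eq, c.period,
      Finset.card_eq_of_equiv e]

/-- The image of a simple cycle under an edge-compatible injection `g` that need only be defined on
its vertices; this is how a cycle is lifted to a graph lying over the original one. -/
noncomputable def map (c : SimpleCycle E) (g : {v // v ∈ c.C} ↪ W)
    (hg : ∀ v, E' (g v) (g (c.η v))) : SimpleCycle E' :=
  c.transport (D := c.C.attach.map g)
    ((Equiv.ofInjective g g.injective).trans (Equiv.subtypeEquivRight (by simp))) hg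

/-- The lift `(v, f v) ↦ (η v, f (η v))` of a simple cycle `(C, η)` along a labelling `f` of its
vertices, a simple cycle of the graph in which the labels do not affect the edges. -/
noncomputable def lift (c : SimpleCycle E) (f : {v // v ∈ c.C} → α) :
    SimpleCycle (fun p q : V × α => E p.1 q.1) :=
  c.map ⟨fun v => (v.1, f v), fun _ _ h => Subtype.ext (congrArg Prod.fst h)⟩ c.edge

theorem lift_C [DecidableEq V] [DecidableEq α] (c : SimpleCycle E) (f : {v // v ∈ c.C} → α) :
    (c.lift f).C = c.C.attach.image (fun v => (v.1, f v)) :=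
  Finset.map_eq_image _ _

theorem mk_mem_lift_C_iff (c : SimpleCycle E) (f : {v // v ∈ c.C} → α) (v : {v // v ∈ c.C})
    (a : α) : (v.1, a) ∈ (c.lift f).C ↔ f v = a := by
  classical simp [lift_C]

theorem lift_injective (c : SimpleCycle E) :
    Function.Injective (c.lift : ({v // v ∈ c.C} → α) → _) := by
  intro f g h
  funext v
  have hv : (v.1, f v) ∈ (c.lift g).C := h ▸ (c.mk_mem_lift_C_iff f v (f v)).2 rfl
  exact ((c.mk_mem_lift_C_iff g v (f v)).1 hv).symm

theorem card_pow_le_card_prod (c : SimpleCycle E) :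
    Fintype.card α ^ c.C.card ≤ Nat.card (SimpleCycle (fun p q : V × α => E p.1 q.1)) :=
  calc
    Fintype.card α ^ c.C.card = Nat.card ({v // v ∈ c.C} → α) := by
      rw [Nat.card_fun, Nat.card_eq_fintype_card, Nat.card_eq_fintype_card, Fintype.card_coe]
    _ ≤ Nat.card (SimpleCycle (fun p q : V × α => E p.1 q.1)) :=
      Nat.card_le_card_of_injective c.lift c.lift_injective

end SimpleCycle

theorem two_pow_le_card_simpleCycle_prod_bool_general
    {V α : Type} [Fintype V] [DecidableEq V] [Fintype α] [DecidableEq α] (E : V → V → Prop)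
    (c : SimpleCycle E) :
    (∃ F : ({v // v ∈ c.C} → α) → SimpleCycle (fun p q : V × α => E p.1 q.1),
        Function.Injective F ∧
        ∀ f, (F f).C = c.C.attach.image (fun v => (v.1, f v))) ∧
    Fintype.card α ^ c.C.card ≤ Nat.card (SimpleCycle (fun p q : V × α => E p.1 q.1)) :=
  ⟨⟨c.lift, c.lift_injective, c.lift_C⟩, c.card_pow_le_card_prod⟩

/-- If a finite directed graph `G = (V, E)` contains a simple cycle `c` of length `n`,
then the graph `G'` on `V × {0,1}` with an edge `((v,b),(v',b'))` iff `(v,v') ∈ E`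
has at least `2 ^ n` simple cycles.  Concretely, every function `f : c.C → Bool`
yields a simple cycle of `G'` on the vertex set `{(v, f v) : v ∈ c.C}`, and distinct
functions yield distinct simple cycles. -/
theorem two_pow_le_card_simpleCycle_prod_bool
    {V : Type} [Fintype V] [DecidableEq V] (E : V → V → Prop) (n : ℕ)
    (c : SimpleCycle E) (hc : c.C.card = n) :
    (∃ F : ({v // v ∈ c.C} → Bool) → SimpleCycle (fun p q : V × Bool => E p.1 q.1),
        Function.Injective F ∧
        ∀ f, (F f).C = c.C.attach.image (fun v => (v.1, f v))) ∧
    2 ^ n ≤ Nat.card (SimpleCycle (fun p q : V × Bool => E p.1 q.1)) := by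
  subst hc
  exact two_pow_le_card_simpleCycle_prod_bool_general E c
end

section
/- Let G = (V, E) be a finite directed graph that is strongly connected (consists of a single strongly connected component), let r ∈ V, and let ((W, B ∪ R), τ) be a witness-tree of G rooted at r with |R| = m red edges. Then the number of simple cycles of G that contain r is at most m. -/
/-- A witness-tree of the directed graph `(V, E)` rooted at `r ∈ V`:
a finite labeled graph `((W, B ∪ R), lab)` with a distinguished root,
whose edges are partitioned into blue edges `B` and red edges `R`, such that
(1) all red edges lead back to the root; (2) no blue edge leads to the root;
(3) every non-root has at least one incoming blue edge; (4) every vertex has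
at most one incoming blue edge; (5) the labeling respects the edges of `G`;
(6) the unfolding is complete; (7) distinct vertices on a common blue path
from the root have distinct labels; (8) the root is labeled by `r`. -/
structure WitnessTree {V : Type} [Fintype V] (E : V → V → Prop) (r : V) where
  W : Type
  fin : Fintype W
  root : W
  B : W → W → Prop
  R : W → W → Prop
  disjoint : ∀ w w', ¬ (B w w' ∧ R w w')
  lab : W → V
  red_to_root : ∀ w w', R w w' → w' = root
  blue_not_to_root : ∀ w w', B w w' → w' ≠ root
  blue_exists : ∀ w', w' ≠ root → ∃ w, B w w'
  blue_unique : ∀ w₁ w₂ w', B w₁ w' → B w₂ w' → w₁ = w₂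
  edge_label : ∀ w w', B w w' ∨ R w w' → E (lab w) (lab w')
  complete : ∀ w v', E (lab w) v' → ∃ w', (B w w' ∨ R w w') ∧ lab w' = v'
  path_distinct : ∀ (n : ℕ) (p : ℕ → W), p 0 = root →
      (∀ i < n, B (p i) (p (i + 1))) →
      ∀ i j, i ≤ n → j ≤ n → p i ≠ p j → lab (p i) ≠ lab (p j)
  root_label : lab root = r

/-- The number of red edges of a witness-tree. -/
noncomputable def WitnessTree.redCount {V : Type} [Fintype V] {E : V → V → Prop} {r : V}
    (t : WitnessTree E r) : ℕ :=
  Nat.card {p : t.W × t.W // t.R p.1 p.2}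

/-!
Unfold a simple cycle through `r` in the witness-tree, starting at the root. Before the cycle
closes no label is `r`, so every edge used is blue; the closing edge is labelled by `r` at its end
and hence is red, since a blue path never repeats the label of the root. Blue edges have unique
predecessors and none enters the root, so the red edge determines the blue path leading to it, whose
labels spell out the cycle.
-/

section RootedPath

variable {α β : Type*}

/-- A path of length `n` that starts at `a` and follows the relation `S`. It is encoded by a
sequence, as in `WitnessTree.path_distinct`; the values of `p` beyond index `n` are irrelevant. -/
structure IsRootedPath (S : α → α → Prop) (a : α) (p : ℕ → α) (n : ℕ) : Prop where
  start : p 0 = a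
  step : ∀ i < n, S (p i) (p (i + 1))

theorem IsRootedPath.of_succ {S : α → α → Prop} {a : α} {p : ℕ → α} {n : ℕ}
    (h : IsRootedPath S a p (n + 1)) : IsRootedPath S a p n :=
  ⟨h.start, fun i hi => h.step i (hi.trans n.lt_succ_self)⟩

theorem IsRootedPath.eqOn_of_end_eq {S : α → α → Prop} {a : α} (hS : Relator.LeftUnique S)
    (ha : ∀ x, ¬ S x a) {p q : ℕ → α} {m n : ℕ} (hp : IsRootedPath S a p m)
    (hq : IsRootedPath S a q n) (hend : p m = q n) : m = n ∧ Set.EqOn p q (Set.Iic m) := by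
  induction m generalizing n with
  | zero =>
    cases n with
    | zero => exact ⟨rfl, fun i hi => by rwa [Nat.le_zero.1 hi]⟩
    | succ n =>
      have hlast := hq.step n n.lt_succ_self
      rw [← hend, hp.start] at hlast
      exact absurd hlast (ha _)
  | succ m ih =>
    have hp_last := hp.step m m.lt_succ_self
    cases n with
    | zero =>
      rw [hend, hq.start] at hp_last
      exact absurd hp_last (ha _)
    | succ n =>
      have hq_last := hq.step n n.lt_succ_self
      rw [← hend] at hq_last
      obtain ⟨rfl, heq⟩ := ih hp.of_succ hq.of_succ (hS hp_last hq_last)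
      refine ⟨rfl, fun i hi => ?_⟩
      rcases Nat.le_succ_iff.1 (Set.mem_Iic.1 hi) with hi | rfl
      · exact heq hi
      · exact hend

theorem IsRootedPath.exists_lift {S : α → α → Prop} {T : β → β → Prop} {f : α → β}
    (hf : ∀ x y, T (f x) y → ∃ x', S x x' ∧ f x' = y) (a : α) {s : ℕ → β} {n : ℕ}
    (hs : IsRootedPath T (f a) s n) :
    ∃ p, IsRootedPath S a p n ∧ ∀ i ≤ n, f (p i) = s i := by
  have : Nonempty α := ⟨a⟩
  choose! next hnext hf_next using hf
  let p : ℕ → α := fun i => Nat.rec a (fun i x => next x (s (i + 1))) i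
  have hstep : ∀ i < n, f (p i) = s i → T (f (p i)) (s (i + 1)) := fun i hi h => h ▸ hs.step i hi
  have hlift : ∀ i ≤ n, f (p i) = s i := by
    intro i hi
    induction i with
    | zero => exact hs.start.symm
    | succ i ih => exact hf_next _ _ (hstep i hi (ih (Nat.le_of_succ_le hi)))
  exact ⟨p, ⟨rfl, fun i hi => hnext _ _ (hstep i hi (hlift i hi.le))⟩, hlift⟩

end RootedPath

theorem exists_iterate_eq_of_minimalPeriod_eq_card {α : Type*} [Fintype α] {f : α → α} {x : α}
    (h : Function.minimalPeriod f x = Fintype.card α) (y : α) : ∃ i, f^[i] x = y := by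
  have hinj : Function.Injective fun i : Fin (Fintype.card α) => f^[i] x := fun i j hij =>
    Fin.ext <| Function.iterate_injOn_Iio_minimalPeriod
      (i.2.trans_eq h.symm) (j.2.trans_eq h.symm) hij
  have hbij := (Fintype.bijective_iff_injective_and_card _).2 ⟨hinj, Fintype.card_fin _⟩
  exact (hbij.surjective y).imp' Fin.val fun _ => id

namespace SimpleCycle

variable {V : Type} [Fintype V] {E : V → V → Prop}

theorem ext_of_apply_eq {c d : SimpleCycle E} (hC : c.C = d.C)
    (hη : ∀ v (hc : v ∈ c.C) (hd : v ∈ d.C), (c.η ⟨v, hc⟩ : V) = d.η ⟨v, hd⟩) : c = d := by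
  obtain ⟨C, _, η, _, _, _⟩ := c
  obtain ⟨D, _, θ, _, _, _⟩ := d
  obtain rfl : C = D := hC
  obtain rfl : η = θ := funext fun v => Subtype.ext (hη v v.2 v.2)
  rfl

theorem minimalPeriod_eq_card (c : SimpleCycle E) (v : {v // v ∈ c.C}) :
    Function.minimalPeriod c.η v = c.C.card :=
  Nat.dvd_antisymm (Function.IsPeriodicPt.minimalPeriod_dvd ((c.period v _).2 dvd_rfl))
    ((c.period v _).1 (Function.iterate_minimalPeriod))

/-- The closed walk in the graph that goes around `c` forever, starting at `v`. -/
def traversal (c : SimpleCycle E) (v : {v // v ∈ c.C}) (i : ℕ) : V :=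
  c.η^[i] v

theorem traversal_succ (c : SimpleCycle E) (v : {v // v ∈ c.C}) (i : ℕ) :
    c.traversal v (i + 1) = c.η (c.η^[i] v) :=
  congrArg Subtype.val (Function.iterate_succ_apply' c.η i v)

theorem isRootedPath_traversal (c : SimpleCycle E) (v : {v // v ∈ c.C}) (n : ℕ) :
    IsRootedPath E v (c.traversal v) n :=
  ⟨rfl, fun i _ => c.traversal_succ v i ▸ c.edge _⟩

theorem traversal_eq_start_iff (c : SimpleCycle E) (v : {v // v ∈ c.C}) (i : ℕ) :
    c.traversal v i = v ↔ c.C.card ∣ i :=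
  Subtype.ext_iff.symm.trans (c.period v i)

theorem traversal_mod_card (c : SimpleCycle E) (v : {v // v ∈ c.C}) (i : ℕ) :
    c.traversal v (i % c.C.card) = c.traversal v i := by
  rw [← c.minimalPeriod_eq_card v, traversal, Function.iterate_mod_minimalPeriod_eq, traversal]

theorem exists_iterate_eq (c : SimpleCycle E) (v w : {v // v ∈ c.C}) : ∃ i, c.η^[i] v = w :=
  exists_iterate_eq_of_minimalPeriod_eq_card
    ((c.minimalPeriod_eq_card v).trans (Fintype.card_coe c.C).symm) w

theorem range_traversal (c : SimpleCycle E) (v : {v // v ∈ c.C}) :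
    Set.range (c.traversal v) = c.C := by
  ext w
  constructor
  · rintro ⟨i, rfl⟩
    exact (c.η^[i] v).2
  · intro hw
    exact (c.exists_iterate_eq v ⟨w, hw⟩).imp fun _ hi => congrArg Subtype.val hi

theorem eq_of_traversal_eq {c d : SimpleCycle E} {r : V} (hc : r ∈ c.C) (hd : r ∈ d.C)
    (h : c.traversal ⟨r, hc⟩ = d.traversal ⟨r, hd⟩) : c = d := by
  have hC : c.C = d.C := by
    rw [← Finset.coe_inj, ← c.range_traversal ⟨r, hc⟩, h, d.range_traversal]
  refine ext_of_apply_eq hC fun v hvc hvd => ?_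
  obtain ⟨i, hi⟩ := c.exists_iterate_eq ⟨r, hc⟩ ⟨v, hvc⟩
  have hi' : d.η^[i] ⟨r, hd⟩ = ⟨v, hvd⟩ :=
    Subtype.ext ((congrFun h i).symm.trans (congrArg Subtype.val hi))
  rw [← hi, ← hi', ← traversal_succ, ← traversal_succ, h]

theorem traversal_eq_of_eqOn {c d : SimpleCycle E} {v : {v // v ∈ c.C}} {w : {w // w ∈ d.C}}
    (hcard : c.C.card = d.C.card)
    (h : Set.EqOn (c.traversal v) (d.traversal w) (Set.Iio c.C.card)) :
    c.traversal v = d.traversal w := by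
  funext i
  rw [← c.traversal_mod_card, ← d.traversal_mod_card, ← hcard]
  exact h (Nat.mod_lt i c.nonempty.card_pos)

end SimpleCycle

namespace WitnessTree

variable {V : Type} [Fintype V] {E : V → V → Prop} {r : V}

theorem lab_ne_of_isRootedPath (t : WitnessTree E r) {p : ℕ → t.W} {n : ℕ}
    (hp : IsRootedPath t.B t.root p (n + 1)) : t.lab (p (n + 1)) ≠ r := by
  have hne : p (n + 1) ≠ p 0 := by
    rw [hp.start]
    exact t.blue_not_to_root _ _ (hp.step n n.lt_succ_self)
  have hlab := t.path_distinct (n + 1) p hp.start hp.step (n + 1) 0 le_rfl (Nat.zero_le _) hne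
  rwa [hp.start, t.root_label] at hlab

theorem eqOn_of_blue_end_eq (t : WitnessTree E r) {p q : ℕ → t.W} {m n : ℕ}
    (hp : IsRootedPath t.B t.root p m) (hq : IsRootedPath t.B t.root q n) (hend : p m = q n) :
    m = n ∧ Set.EqOn p q (Set.Iic m) :=
  hp.eqOn_of_end_eq (S := t.B) (fun w₁ w₂ w => t.blue_unique w₁ w₂ w)
    (fun w hB => t.blue_not_to_root w t.root hB rfl) hq hend

theorem exists_blue_lift_of_first_return (t : WitnessTree E r) {s : ℕ → V} {n : ℕ}
    (hs : IsRootedPath E r s (n + 1)) (hne : ∀ i < n, s (i + 1) ≠ r) (hret : s (n + 1) = r) :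
    ∃ p, IsRootedPath t.B t.root p n ∧ t.R (p n) t.root ∧ ∀ i ≤ n, t.lab (p i) = s i := by
  rw [← t.root_label] at hs
  obtain ⟨p, hp, hlab⟩ := hs.exists_lift t.complete t.root
  have hblue : IsRootedPath t.B t.root p n := by
    refine ⟨hp.start, fun i hi => (hp.step i (by omega)).resolve_right fun hR => hne i hi ?_⟩
    rw [← hlab (i + 1) (by omega), t.red_to_root _ _ hR, t.root_label]
  have hred : t.R (p n) (p (n + 1)) := by
    refine (hp.step n n.lt_succ_self).resolve_left fun hB => ?_
    have hpath : IsRootedPath t.B t.root p (n + 1) :=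
      ⟨hp.start, fun i hi => (Nat.lt_succ_iff_lt_or_eq.1 hi).elim (hblue.step i) (· ▸ hB)⟩
    exact t.lab_ne_of_isRootedPath hpath ((hlab _ le_rfl).trans hret)
  exact ⟨p, hblue, t.red_to_root _ _ hred ▸ hred, fun i hi => hlab i (by omega)⟩

theorem exists_blue_lift_traversal (t : WitnessTree E r) (c : SimpleCycle E) (hr : r ∈ c.C) :
    ∃ (n : ℕ) (p : ℕ → t.W), c.C.card = n + 1 ∧ IsRootedPath t.B t.root p n ∧
      t.R (p n) t.root ∧ ∀ i ≤ n, t.lab (p i) = c.traversal ⟨r, hr⟩ i := by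
  obtain ⟨n, hn⟩ := Nat.exists_eq_add_one.2 c.nonempty.card_pos
  have hreturn := c.traversal_eq_start_iff ⟨r, hr⟩
  obtain ⟨p, hp⟩ := t.exists_blue_lift_of_first_return
    (c.isRootedPath_traversal ⟨r, hr⟩ (n + 1))
    (fun i hi h => Nat.not_dvd_of_pos_of_lt i.succ_pos (by omega) ((hreturn (i + 1)).1 h))
    ((hreturn (n + 1)).2 hn.dvd)
  exact ⟨n, p, hn, hp⟩

end WitnessTree

theorem card_simpleCycle_through_root_le_redCount_general
    {V : Type} [Fintype V] {E : V → V → Prop} {r : V} (t : WitnessTree E r) :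
    Nat.card {c : SimpleCycle E // r ∈ c.C} ≤ t.redCount := by
  have := t.fin
  choose n p hcard hblue hred hlab using fun c : {c : SimpleCycle E // r ∈ c.C} =>
    t.exists_blue_lift_traversal c.1 c.2
  let redEdge (c : {c : SimpleCycle E // r ∈ c.C}) : {e : t.W × t.W // t.R e.1 e.2} :=
    ⟨(p c (n c), t.root), hred c⟩
  refine Nat.card_le_card_of_injective redEdge fun c d hcd => ?_
  have hend : p c (n c) = p d (n d) := congrArg (fun e => e.1.1) hcd
  obtain ⟨hn, hpq⟩ := t.eqOn_of_blue_end_eq (hblue c) (hblue d) hend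
  have htraversal : c.1.traversal ⟨r, c.2⟩ = d.1.traversal ⟨r, d.2⟩ := by
    refine SimpleCycle.traversal_eq_of_eqOn (by rw [hcard, hcard, hn]) fun i hi => ?_
    have hi : i ≤ n c := Nat.le_of_lt_succ (hi.trans_eq (hcard c))
    rw [← hlab c i hi, hpq hi, hlab d i (hn ▸ hi)]
  exact Subtype.ext (SimpleCycle.eq_of_traversal_eq c.2 d.2 htraversal)

/-- If `G = (V, E)` is strongly connected, `r ∈ V`, and `((W, B ∪ R), lab)` is a
witness-tree of `G` rooted at `r` with `m` red edges, then the number of simple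
cycles of `G` containing `r` is at most `m`. -/
theorem card_simpleCycle_through_root_le_redCount
    {V : Type} [Fintype V] (E : V → V → Prop)
    (hsc : ∀ u v : V, Relation.ReflTransGen E u v)
    (r : V) (t : WitnessTree E r) (m : ℕ) (hm : t.redCount = m) :
    Nat.card {c : SimpleCycle E // r ∈ c.C} ≤ m :=
  hm ▸ card_simpleCycle_through_root_le_redCount_general t
end

section
/- For every k ≥ 1, consider the directed graph G_k with vertex set {s} ∪ {a_1, b_1, a_2, b_2, …, a_k, b_k} (so 2k+1 vertices) and edge set consisting of: the edges (s, a_1) and (s, b_1); for every 1 ≤ i < k, the four edges (a_i, a_{i+1}), (a_i, b_{i+1}), (b_i, a_{i+1}), (b_i, b_{i+1}); and the edges (a_k, s) and (b_k, s). Then G_k has exactly 2^k simple cycles. -/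
/-!
Label `s` with level `0` and `a_i`, `b_i` with level `i`, the levels being taken modulo `k + 1`:
the edges are then all pairs whose target lies one level above its source. A cycle therefore climbs
through all levels and meets `s`, the only vertex at level `0`. It is back at `s` after `k + 1`
steps, so it has at most `k + 1` vertices and meets each level exactly once. Thus a simple cycle is
the choice of one vertex per level.
-/

open Finset

/-- A choice of one vertex at each level of the level map `ℓ`. -/
abbrev LevelSection {V ι : Type*} (ℓ : V → ι) := ∀ i, {v // ℓ v = i}

namespace LevelSection

variable {V ι : Type*} {ℓ : V → ι}

theorem level_apply (g : LevelSection ℓ) (i : ι) : ℓ (g i) = i := (g i).2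

variable [Fintype ι]

/-- The set of vertices chosen by a level section. -/
def vertices (g : LevelSection ℓ) : Finset V :=
  univ.map ⟨fun i ↦ (g i : V), Function.LeftInverse.injective g.level_apply⟩

theorem mem_vertices {g : LevelSection ℓ} {v : V} : v ∈ g.vertices ↔ (g (ℓ v) : V) = v := by
  refine mem_map.trans ⟨?_, fun h ↦ ⟨ℓ v, mem_univ _, h⟩⟩
  rintro ⟨i, -, rfl⟩
  exact congrArg (fun j ↦ (g j : V)) (g.level_apply i)

theorem apply_mem_vertices (g : LevelSection ℓ) (i : ι) : (g i : V) ∈ g.vertices :=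
  mem_map.2 ⟨i, mem_univ i, rfl⟩

theorem card_vertices (g : LevelSection ℓ) : #g.vertices = Fintype.card ι := card_map _

theorem vertices_injective : Function.Injective (vertices : LevelSection ℓ → Finset V) := by
  intro g g' h
  funext i
  have hmem : (g i : V) ∈ g'.vertices := h ▸ g.apply_mem_vertices i
  have hval : (g' (ℓ (g i)) : V) = g i := mem_vertices.1 hmem
  rw [g.level_apply] at hval
  exact Subtype.ext hval.symm

/-- The levels in bijection with the vertices of a level section, the inverse being the level
map. -/
def equivVertices (g : LevelSection ℓ) : ι ≃ {v // v ∈ g.vertices} where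
  toFun i := ⟨g i, g.apply_mem_vertices i⟩
  invFun v := ℓ v
  left_inv := g.level_apply
  right_inv v := Subtype.ext (mem_vertices.1 v.2)

end LevelSection

namespace SimpleCycle

variable {V : Type} {ι : Type*} [Fintype V] {E : V → V → Prop} {ℓ : V → ι} {σ : Equiv.Perm ι}

theorem eq_of_C_eq_of_injOn {c d : SimpleCycle E} (hE : ∀ x y, E x y → ℓ y = σ (ℓ x))
    (hC : c.C = d.C) (hinj : Set.InjOn ℓ c.C) : c = d := by
  obtain ⟨C, _, η, _, hη, _⟩ := c
  obtain ⟨C', _, η', _, hη', _⟩ := d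
  obtain rfl : C = C' := hC
  obtain rfl : η = η' := by
    funext v
    have hlevel : ℓ (η v) = ℓ (η' v) := (hE _ _ (hη v)).trans (hE _ _ (hη' v)).symm
    exact Subtype.ext (hinj (η v).2 (η' v).2 hlevel)
  rfl

theorem level_iterate (c : SimpleCycle E) (hE : ∀ x y, E x y → ℓ y = σ (ℓ x))
    (n : ℕ) (v : {v // v ∈ c.C}) : ℓ (c.η^[n] v) = (σ ^ n) (ℓ v) := by
  have hsemi : Function.Semiconj (fun v : {v // v ∈ c.C} ↦ ℓ v) c.η σ :=
    fun v ↦ hE _ _ (c.edge v)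
  rw [← Equiv.Perm.iterate_eq_pow]
  exact hsemi.iterate_right n v

variable [Fintype ι]

theorem surjOn_level (c : SimpleCycle E) (hE : ∀ x y, E x y → ℓ y = σ (ℓ x))
    (hσ : σ.IsCycleOn (univ : Finset ι)) : Set.SurjOn ℓ c.C (univ : Finset ι) := by
  intro i _
  obtain ⟨v, hv⟩ := c.nonempty
  obtain ⟨n, -, hn⟩ := hσ.exists_pow_eq (mem_univ (ℓ v)) (mem_univ i)
  exact ⟨c.η^[n] ⟨v, hv⟩, Subtype.prop _, (c.level_iterate hE n _).trans hn⟩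

theorem card_le_card_levels (c : SimpleCycle E) (hE : ∀ x y, E x y → ℓ y = σ (ℓ x))
    (hσ : σ.IsCycleOn (univ : Finset ι)) {r : V} (hr : ∀ v, ℓ v = ℓ r → v = r) :
    #c.C ≤ Fintype.card ι := by
  have hrC : r ∈ c.C := by
    obtain ⟨v, hv, hvr⟩ := c.surjOn_level hE hσ (mem_univ (ℓ r))
    exact hr v hvr ▸ hv
  have hreturn : c.η^[Fintype.card ι] ⟨r, hrC⟩ = ⟨r, hrC⟩ := by
    refine Subtype.ext (hr _ ?_)
    rw [c.level_iterate hE, ← card_univ, hσ.pow_card_apply (mem_univ _)]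
  exact Nat.le_of_dvd (Fintype.card_pos_iff.2 ⟨ℓ r⟩) ((c.period _ _).1 hreturn)

theorem injOn_level (c : SimpleCycle E) (hE : ∀ x y, E x y → ℓ y = σ (ℓ x))
    (hσ : σ.IsCycleOn (univ : Finset ι)) {r : V} (hr : ∀ v, ℓ v = ℓ r → v = r) :
    Set.InjOn ℓ c.C :=
  injOn_of_surjOn_of_card_le ℓ (fun _ _ ↦ mem_univ _) (c.surjOn_level hE hσ)
    (c.card_le_card_levels hE hσ hr)

/-- The simple cycle that moves along a level section as `σ` permutes the levels. -/
def ofLevelSection [Nonempty ι] (hE : ∀ x y, ℓ y = σ (ℓ x) → E x y)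
    (hσ : σ.IsCycleOn (univ : Finset ι)) (g : LevelSection ℓ) : SimpleCycle E where
  C := g.vertices
  nonempty := ⟨_, g.apply_mem_vertices (Classical.arbitrary ι)⟩
  η := g.equivVertices.permCongr σ
  bij := Equiv.bijective _
  edge v := hE _ _ (g.level_apply (σ (ℓ v)))
  period v n := by
    obtain ⟨i, rfl⟩ := g.equivVertices.surjective v
    have hsemi : Function.Semiconj g.equivVertices σ (g.equivVertices.permCongr σ) :=
      fun i ↦ by rw [Equiv.permCongr_apply, Equiv.symm_apply_apply]
    rw [← (hsemi.iterate_right n) i, g.equivVertices.apply_eq_iff_eq,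
      Equiv.Perm.iterate_eq_pow, hσ.pow_apply_eq (mem_univ i), g.card_vertices,
      card_univ]

theorem ofLevelSection_bijective [Nonempty ι] (hE : ∀ x y, E x y ↔ ℓ y = σ (ℓ x))
    (hσ : σ.IsCycleOn (univ : Finset ι)) {r : V} (hr : ∀ v, ℓ v = ℓ r → v = r) :
    Function.Bijective (ofLevelSection (fun x y ↦ (hE x y).2) hσ) := by
  have hE' : ∀ x y, E x y → ℓ y = σ (ℓ x) := fun x y ↦ (hE x y).1
  refine ⟨fun g g' h ↦ LevelSection.vertices_injective (congrArg SimpleCycle.C h), fun c ↦ ?_⟩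
  choose g hgC hgℓ using fun i ↦ c.surjOn_level hE' hσ (mem_univ i)
  have hinj : Set.InjOn ℓ c.C := c.injOn_level hE' hσ hr
  refine ⟨fun i ↦ ⟨g i, hgℓ i⟩, (eq_of_C_eq_of_injOn hE' ?_ hinj).symm⟩
  ext v
  refine Iff.trans ⟨fun hv ↦ ?_, fun hv ↦ ?_⟩ LevelSection.mem_vertices.symm
  · exact hinj (hgC _) hv (hgℓ _)
  · exact hv ▸ hgC _

theorem card_eq_prod_card_level (hE : ∀ x y, E x y ↔ ℓ y = σ (ℓ x))
    (hσ : σ.IsCycleOn (univ : Finset ι)) {r : V} (hr : ∀ v, ℓ v = ℓ r → v = r) :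
    Nat.card (SimpleCycle E) = ∏ i, Nat.card {v // ℓ v = i} := by
  have : Nonempty ι := ⟨ℓ r⟩
  rw [← Nat.card_eq_of_bijective _ (ofLevelSection_bijective hE hσ hr), Nat.card_pi]

end SimpleCycle

/-- The edge relation of the ladder with `k` rungs, each a copy of `β`, closed up through an
additional vertex `none`. -/
def LadderAdj (k : ℕ) (β : Type) : Option (Fin k × β) → Option (Fin k × β) → Prop := fun x y ↦
  match x, y with
  | none, some (i, _) => (i : ℕ) = 0
  | some (i, _), some (j, _) => (j : ℕ) = (i : ℕ) + 1
  | some (i, _), none => (i : ℕ) = k - 1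
  | none, none => False

/-- The level of a ladder vertex: `0` for `none`, and rung `i` is at level `i + 1`. -/
def ladderLevel {k : ℕ} {β : Type} : Option (Fin k × β) → Fin (k + 1)
  | none => 0
  | some (i, _) => i.succ

theorem ladderAdj_iff_ladderLevel_eq_finRotate {k : ℕ} {β : Type} (hk : 1 ≤ k)
    (x y : Option (Fin k × β)) :
    LadderAdj k β x y ↔ ladderLevel y = finRotate (k + 1) (ladderLevel x) := by
  rw [finRotate_apply, Fin.ext_iff, Fin.val_add_one]
  rcases x with _ | ⟨i, b⟩ <;> rcases y with _ | ⟨j, b'⟩ <;>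
    simp only [LadderAdj, ladderLevel, Fin.ext_iff, Fin.val_last, Fin.val_succ, Fin.val_zero] <;>
    grind

theorem isCycleOn_finRotate_univ :
    ∀ n : ℕ, (finRotate n).IsCycleOn (univ : Finset (Fin n))
  | 0 | 1 => Equiv.Perm.isCycleOn_of_subsingleton _ _
  | n + 2 => by
    have h := isCycle_finRotate (n := n).isCycleOn
    rwa [← Equiv.Perm.coe_support_eq_set_support, support_finRotate] at h

theorem eq_none_of_ladderLevel_eq_zero {k : ℕ} {β : Type} :
    ∀ v : Option (Fin k × β), ladderLevel v = 0 → v = none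
  | none, _ => rfl
  | some (i, _), h => absurd h i.succ_ne_zero

theorem card_ladderLevel_eq_zero (k : ℕ) (β : Type) :
    Nat.card {v : Option (Fin k × β) // ladderLevel v = 0} = 1 :=
  Nat.card_eq_one_iff_exists.2
    ⟨⟨none, rfl⟩, fun ⟨v, hv⟩ ↦ Subtype.ext (eq_none_of_ladderLevel_eq_zero v hv)⟩

theorem card_ladderLevel_eq_succ {k : ℕ} (β : Type) (i : Fin k) :
    Nat.card {v : Option (Fin k × β) // ladderLevel v = i.succ} = Nat.card β := by
  refine (Nat.card_eq_of_bijective (fun b : β ↦ ⟨some (i, b), rfl⟩) ⟨fun b b' h ↦ ?_, ?_⟩).symm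
  · simpa only [Option.some.injEq, Prod.mk.injEq, true_and] using congrArg Subtype.val h
  · rintro ⟨_ | ⟨j, b⟩, h⟩
    · exact absurd h.symm i.succ_ne_zero
    · obtain rfl : j = i := Fin.succ_injective _ h
      exact ⟨b, rfl⟩

theorem card_simpleCycle_ladder_eq_two_pow_general (k : ℕ) (hk : 1 ≤ k) (β : Type) [Fintype β] :
    Nat.card (SimpleCycle (LadderAdj k β)) = Fintype.card β ^ k := by
  rw [SimpleCycle.card_eq_prod_card_level (ladderAdj_iff_ladderLevel_eq_finRotate hk)
    (isCycleOn_finRotate_univ _) (r := none) eq_none_of_ladderLevel_eq_zero, Fin.prod_univ_succ,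
    card_ladderLevel_eq_zero, one_mul]
  simp only [card_ladderLevel_eq_succ, prod_const, card_fin, Nat.card_eq_fintype_card (α := β)]

/-- For `k ≥ 1`, the directed graph `G_k` with vertices
`s` (encoded as `none`) and `a_1, b_1, …, a_k, b_k` (encoded as `some (i, ff)` and
`some (i, tt)` for `i : Fin k`), and with edges from `s` to `a_1` and `b_1`, from
each of `a_i, b_i` to each of `a_{i+1}, b_{i+1}` for `1 ≤ i < k`, and from `a_k`
and `b_k` back to `s`, has exactly `2 ^ k` simple cycles. -/
theorem card_simpleCycle_ladder_eq_two_pow (k : ℕ) (hk : 1 ≤ k) :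
    Nat.card (SimpleCycle (V := Option (Fin k × Bool)) (fun x y =>
      match x, y with
      | none, some (i, _) => (i : ℕ) = 0
      | some (i, _), some (j, _) => (j : ℕ) = (i : ℕ) + 1
      | some (i, _), none => (i : ℕ) = k - 1
      | none, none => False)) = 2 ^ k := by
  rw [← Fintype.card_bool]
  convert card_simpleCycle_ladder_eq_two_pow_general k hk Bool with x y
  rcases x with _ | _ <;> rcases y with _ | _ <;> rfl
end
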